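/- Let T_n(t) (n ≥ 0, t ≥ 0) be strongly continuous contraction semigroups of bounded linear operators on a Banach space X such that T_n(t)u → T_0(t)u in X as n → ∞ for every u ∈ X and every t > 0. Then for every fixed u ∈ X, the convergence T_n(t)u → T_0(t)u is uniform in t ∈ [0,1]; that is, sup_{0≤t≤1} ‖T_n(t)u − T_0(t)u‖ → 0 as n → ∞. -/

import Mathlib

open Filter Topology

/-!
The average `h⁻¹ • ∫ s in 0..h, T_n(s)u` changes under `T_n(t)` by `O(t / h)`, uniformly in `n`,
and by dominated convergence it converges as `n → ∞` to the corresponding average of the limit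
orbit. Hence `T_n(t)w → w` jointly as `n → ∞` and `t → 0` whenever `w` is an average of the limit
orbit. These averages converge to `u` as `h → 0`, and the set of such `w` is closed because the
semigroups are equibounded, so `T_n(t)u → u` jointly as well. The semigroup law carries this joint
convergence from `0` to every `t₀ ≥ 0`, which is locally uniform convergence in `t`.
-/

open Set MeasureTheory

/-- A strongly continuous one-parameter semigroup `(T t)_{t ≥ 0}` of bounded operators. Time is
encoded as a real number, and nothing is required of `T t` for `t < 0`. -/
structure IsC0Semigroup {X : Type*} [NormedAddCommGroup X] [NormedSpace ℝ X]
    (T : ℝ → X →L[ℝ] X) : Prop where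
  map_zero : T 0 = ContinuousLinearMap.id ℝ X
  map_add : ∀ s ≥ (0 : ℝ), ∀ t ≥ (0 : ℝ), T (s + t) = (T s).comp (T t)
  continuousOn_orbit : ∀ u, ContinuousOn (fun t => T t u) (Ici 0)

theorem isClosed_setOfPred_tendsto_of_opNorm_le {𝕜 E F ι : Type*} [NontriviallyNormedField 𝕜]
    [SeminormedAddCommGroup E] [NormedSpace 𝕜 E] [SeminormedAddCommGroup F] [NormedSpace 𝕜 F]
    {l : Filter ι} {A : ι → E →L[𝕜] F} {M : ℝ} (hA : ∀ᶠ i in l, ‖A i‖ ≤ M) (B : E →L[𝕜] F) :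
    IsClosed {x | Tendsto (fun i => A i x) l (𝓝 (B x))} := by
  let A' : {i | ‖A i‖ ≤ M} → E →L[𝕜] F := fun i => A i
  have hbound : ∃ C, ∀ i, ‖A' i‖ ≤ C := ⟨M, fun i => i.2⟩
  have hequi : Equicontinuous ((↑) ∘ A') :=
    ((NormedSpace.equicontinuous_TFAE A').out 1 5).mpr hbound
  have hl : map Subtype.val (comap (Subtype.val : {i | ‖A i‖ ≤ M} → ι) l) = l :=
    map_comap_of_mem (by rw [Subtype.range_coe]; exact hA)
  rw [← hl]
  simp only [tendsto_map'_iff]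
  exact hequi.isClosed_setOfPred_tendsto B.continuous

theorem tendsto_inv_smul_integral_nhdsGT_zero {E : Type*} [NormedAddCommGroup E]
    [NormedSpace ℝ E] [CompleteSpace E] {f : ℝ → E} (hf : ContinuousOn f (Ici 0)) :
    Tendsto (fun h => h⁻¹ • ∫ s in (0 : ℝ)..h, f s) (𝓝[>] 0) (𝓝 (f 0)) := by
  have hmeas : StronglyMeasurableAtFilter f (𝓝[>] 0) :=
    ⟨Ioi 0, self_mem_nhdsWithin,
      (hf.mono Ioi_subset_Ici_self).aestronglyMeasurable measurableSet_Ioi⟩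
  have hderiv : HasDerivWithinAt (fun h => ∫ s in (0 : ℝ)..h, f s) (f 0) (Ioi 0) 0 :=
    (intervalIntegral.integral_hasDerivWithinAt_right (s := Ici 0) IntervalIntegrable.refl hmeas
      ((hf 0 self_mem_Ici).mono Ioi_subset_Ici_self)).mono Ioi_subset_Ici_self
  simpa [slope_fun_def] using (hasDerivWithinAt_iff_tendsto_slope' self_notMem_Ioi).1 hderiv

namespace IsC0Semigroup

section SingleSemigroup

variable {X : Type*} [NormedAddCommGroup X] [NormedSpace ℝ X] {T : ℝ → X →L[ℝ] X}

theorem intervalIntegrable_orbit (hT : IsC0Semigroup T) (u : X) {a b : ℝ} (ha : 0 ≤ a)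
    (hb : 0 ≤ b) : IntervalIntegrable (fun s => T s u) volume a b :=
  ((hT.continuousOn_orbit u).mono fun _ hs => (le_min ha hb).trans hs.1).intervalIntegrable

theorem apply_integral_orbit [CompleteSpace X] (hT : IsC0Semigroup T) (u : X) {t h : ℝ}
    (ht : 0 ≤ t) (hh : 0 ≤ h) :
    T t (∫ s in (0 : ℝ)..h, T s u) = ∫ s in t..(h + t), T s u := by
  calc T t (∫ s in (0 : ℝ)..h, T s u) = ∫ s in (0 : ℝ)..h, T t (T s u) :=
        ((T t).intervalIntegral_comp_comm (hT.intervalIntegrable_orbit u le_rfl hh)).symm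
    _ = ∫ s in (0 : ℝ)..h, T (s + t) u := by
        refine intervalIntegral.integral_congr fun s hs => ?_
        rw [uIcc_of_le hh] at hs
        simp only [add_comm s t, hT.map_add t ht s hs.1, ContinuousLinearMap.comp_apply]
    _ = ∫ s in t..(h + t), T s u := by
        rw [intervalIntegral.integral_comp_add_right (fun s => T s u), zero_add]

theorem norm_apply_integral_orbit_sub_le [CompleteSpace X] (hT : IsC0Semigroup T) (u : X)
    {t h M : ℝ} (ht : 0 ≤ t) (hh : 0 ≤ h) (hM : ∀ s ∈ Icc 0 (h + t), ‖T s‖ ≤ M) :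
    ‖T t (∫ s in (0 : ℝ)..h, T s u) - ∫ s in (0 : ℝ)..h, T s u‖ ≤ 2 * (M * ‖u‖) * t := by
  have hint : ∀ {a b : ℝ}, 0 ≤ a → 0 ≤ b → IntervalIntegrable (fun s => T s u) volume a b :=
    hT.intervalIntegrable_orbit u
  have hbound : ∀ a, 0 ≤ a → a ≤ h → ‖∫ s in a..(a + t), T s u‖ ≤ M * ‖u‖ * t := by
    intro a ha hah
    have := intervalIntegral.norm_integral_le_of_norm_le_const (a := a) (b := a + t)
      (f := fun s => T s u) (C := M * ‖u‖) fun s hs => by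
        rw [uIoc_of_le (by linarith)] at hs
        exact (T s).le_of_opNorm_le (hM s ⟨by linarith [hs.1], by linarith [hs.2]⟩) u
    rwa [add_sub_cancel_left, abs_of_nonneg ht] at this
  have hshift : T t (∫ s in (0 : ℝ)..h, T s u) - ∫ s in (0 : ℝ)..h, T s u =
      (∫ s in h..(h + t), T s u) - ∫ s in (0 : ℝ)..(0 + t), T s u := by
    rw [hT.apply_integral_orbit u ht hh, zero_add]
    exact intervalIntegral.integral_interval_sub_interval_comm' (hint ht (by linarith))
      (hint le_rfl hh) (hint ht le_rfl)
  rw [hshift]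
  linarith [norm_sub_le (∫ s in h..(h + t), T s u) (∫ s in (0 : ℝ)..(0 + t), T s u),
    hbound h hh le_rfl, hbound 0 le_rfl hh]

theorem norm_apply_sub_apply_le (hT : IsC0Semigroup T) (u : X) {b M s t : ℝ}
    (hM : ∀ r ∈ Icc 0 b, ‖T r‖ ≤ M) (hs : s ∈ Icc 0 b) (ht : t ∈ Icc 0 b) :
    ‖T t u - T s u‖ ≤ M * ‖T |t - s| u - u‖ := by
  wlog hst : s ≤ t generalizing s t
  · rw [norm_sub_rev, abs_sub_comm]
    exact this ht hs (le_of_not_ge hst)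
  have hfactor : T t = (T s).comp (T (t - s)) := by
    rw [← hT.map_add s hs.1 (t - s) (sub_nonneg.2 hst), add_sub_cancel]
  rw [abs_of_nonneg (sub_nonneg.2 hst), hfactor, ContinuousLinearMap.comp_apply, ← map_sub]
  exact (T s).le_of_opNorm_le (hM s hs) _

end SingleSemigroup

section Family

variable {X ι : Type*} [NormedAddCommGroup X] [NormedSpace ℝ X] {l : Filter ι}
  [l.IsCountablyGenerated] {T : ι → ℝ → X →L[ℝ] X} {u : X} {v : ℝ → X}

theorem tendsto_integral_orbit (hT : ∀ i, IsC0Semigroup (T i)) {h M : ℝ} (hh : 0 ≤ h)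
    (hM : ∀ i, ∀ t ∈ Icc 0 h, ‖T i t‖ ≤ M)
    (hconv : ∀ t > 0, Tendsto (fun i => T i t u) l (𝓝 (v t))) :
    Tendsto (fun i => ∫ s in (0 : ℝ)..h, T i s u) l (𝓝 (∫ s in (0 : ℝ)..h, v s)) := by
  apply intervalIntegral.tendsto_integral_filter_of_dominated_convergence fun _ => M * ‖u‖
  · exact .of_forall fun i => by
      simpa only [uIoc_of_le hh] using
        ((hT i).intervalIntegrable_orbit u le_rfl hh).aestronglyMeasurable
  · refine .of_forall fun i => .of_forall fun s hs => ?_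
    rw [uIoc_of_le hh] at hs
    exact (T i s).le_of_opNorm_le (hM i s (Ioc_subset_Icc_self hs)) u
  · exact intervalIntegrable_const
  · refine .of_forall fun s hs => ?_
    rw [uIoc_of_le hh] at hs
    exact hconv s hs.1

variable [CompleteSpace X]

theorem tendsto_apply_integral_limit_orbit (hT : ∀ i, IsC0Semigroup (T i)) {h M : ℝ} (hh : 0 ≤ h)
    (hM : ∀ i, ∀ t ∈ Icc 0 (h + 1), ‖T i t‖ ≤ M)
    (hconv : ∀ t > 0, Tendsto (fun i => T i t u) l (𝓝 (v t))) :
    Tendsto (fun p : ι × ℝ => T p.1 p.2 (∫ s in (0 : ℝ)..h, v s)) (l ×ˢ 𝓝[≥] 0)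
      (𝓝 (∫ s in (0 : ℝ)..h, v s)) := by
  set w := ∫ s in (0 : ℝ)..h, v s
  let U : ι → X := fun i => ∫ s in (0 : ℝ)..h, T i s u
  have hU : Tendsto (fun p : ι × ℝ => ‖U p.1 - w‖) (l ×ˢ 𝓝[≥] 0) (𝓝 0) :=
    (tendsto_iff_norm_sub_tendsto_zero.1 <| tendsto_integral_orbit hT hh
      (fun i t ht => hM i t ⟨ht.1, by linarith [ht.2]⟩) hconv).comp tendsto_fst
  have htime : Tendsto (fun p : ι × ℝ => p.2) (l ×ˢ 𝓝[≥] 0) (𝓝 0) :=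
    tendsto_nhds_of_tendsto_nhdsWithin tendsto_snd
  have hmajorant : Tendsto (fun p : ι × ℝ => 2 * (M * ‖u‖) * p.2 + (M * ‖U p.1 - w‖ + ‖U p.1 - w‖))
      (l ×ˢ 𝓝[≥] 0) (𝓝 0) := by
    simpa using (htime.const_mul (2 * (M * ‖u‖))).add ((hU.const_mul M).add hU)
  refine tendsto_iff_norm_sub_tendsto_zero.2 (squeeze_zero' (.of_forall fun _ => norm_nonneg _) ?_
    hmajorant)
  filter_upwards [tendsto_snd.eventually (Icc_mem_nhdsGE one_pos)] with ⟨i, t⟩ ht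
  have hMt : ∀ s ∈ Icc 0 (h + t), ‖T i s‖ ≤ M := fun s hs =>
    hM i s ⟨hs.1, hs.2.trans (by linarith [ht.2])⟩
  calc ‖T i t w - w‖ = ‖(T i t (U i) - U i) - (T i t (U i - w) - (U i - w))‖ := by
        rw [map_sub]; congr 1; abel
    _ ≤ ‖T i t (U i) - U i‖ + (‖T i t (U i - w)‖ + ‖U i - w‖) :=
        (norm_sub_le _ _).trans (by gcongr; exact norm_sub_le _ _)
    _ ≤ 2 * (M * ‖u‖) * t + (M * ‖U i - w‖ + ‖U i - w‖) := by
        gcongr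
        · exact (hT i).norm_apply_integral_orbit_sub_le u ht.1 hh hMt
        · exact (T i t).le_of_opNorm_le (hMt t ⟨ht.1, by linarith⟩) _

theorem tendsto_orbit_prod_nhdsGE_zero (hT : ∀ i, IsC0Semigroup (T i))
    (hM : ∀ b, ∃ M, ∀ i, ∀ t ∈ Icc 0 b, ‖T i t‖ ≤ M) (hv : ContinuousOn v (Ici 0))
    (hv0 : v 0 = u) (hconv : ∀ t > 0, Tendsto (fun i => T i t u) l (𝓝 (v t))) :
    Tendsto (fun p : ι × ℝ => T p.1 p.2 u) (l ×ˢ 𝓝[≥] 0) (𝓝 u) := by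
  obtain ⟨M, hM₁⟩ := hM 1
  have hbound : ∀ᶠ p : ι × ℝ in l ×ˢ 𝓝[≥] 0, ‖T p.1 p.2‖ ≤ M := by
    filter_upwards [tendsto_snd.eventually (Icc_mem_nhdsGE one_pos)] with p hp
    exact hM₁ p.1 p.2 hp
  have haverage : ∀ᶠ h in 𝓝[>] (0 : ℝ), (h⁻¹ • ∫ s in (0 : ℝ)..h, v s) ∈
      {w | Tendsto (fun p : ι × ℝ => T p.1 p.2 w) (l ×ˢ 𝓝[≥] 0) (𝓝 w)} := by
    filter_upwards [self_mem_nhdsWithin] with h hh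
    obtain ⟨M', hM'⟩ := hM (h + 1)
    simpa only [mem_ofPred_eq, map_smul] using
      (tendsto_apply_integral_limit_orbit hT (le_of_lt hh) hM' hconv).const_smul h⁻¹
  exact (isClosed_setOfPred_tendsto_of_opNorm_le hbound (.id ℝ X)).mem_of_tendsto
    (hv0 ▸ tendsto_inv_smul_integral_nhdsGT_zero hv) haverage

theorem tendsto_orbit_prod_nhdsWithin_Ici (hT : ∀ i, IsC0Semigroup (T i))
    (hM : ∀ b, ∃ M, ∀ i, ∀ t ∈ Icc 0 b, ‖T i t‖ ≤ M) (hv : ContinuousOn v (Ici 0))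
    (hv0 : v 0 = u) (hconv : ∀ t > 0, Tendsto (fun i => T i t u) l (𝓝 (v t)))
    {t₀ : ℝ} (ht₀ : 0 ≤ t₀) :
    Tendsto (fun p : ι × ℝ => T p.1 p.2 u) (l ×ˢ 𝓝[Ici 0] t₀) (𝓝 (v t₀)) := by
  obtain ⟨M, hMt₀⟩ := hM (t₀ + 1)
  have hpointwise : Tendsto (fun i => T i t₀ u) l (𝓝 (v t₀)) := by
    rcases ht₀.eq_or_lt with rfl | hpos
    · simpa [(hT _).map_zero, hv0] using tendsto_const_nhds
    · exact hconv t₀ hpos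
  have htime : Tendsto (fun t => |t - t₀|) (𝓝[Ici 0] t₀) (𝓝[≥] 0) :=
    tendsto_nhdsWithin_iff.2 ⟨((by fun_prop : Continuous fun t => |t - t₀|).tendsto' t₀ 0
      (by simp)).mono_left nhdsWithin_le_nhds, .of_forall fun t => abs_nonneg (t - t₀)⟩
  have hincrement : Tendsto (fun p : ι × ℝ => M * ‖T p.1 |p.2 - t₀| u - u‖)
      (l ×ˢ 𝓝[Ici 0] t₀) (𝓝 0) := by
    simpa using (tendsto_iff_norm_sub_tendsto_zero.1 <|
      (tendsto_orbit_prod_nhdsGE_zero hT hM hv hv0 hconv).comp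
        (tendsto_id.prodMap htime)).const_mul M
  have hdiff : Tendsto (fun p : ι × ℝ => T p.1 p.2 u - T p.1 t₀ u) (l ×ˢ 𝓝[Ici 0] t₀) (𝓝 0) := by
    refine squeeze_zero_norm' ?_ hincrement
    have hnear : ∀ᶠ t in 𝓝[Ici 0] t₀, t ∈ Icc 0 (t₀ + 1) := by
      filter_upwards [self_mem_nhdsWithin,
        nhdsWithin_le_nhds (Iic_mem_nhds (lt_add_one t₀))] with t h0 h1 using ⟨h0, h1⟩
    filter_upwards [tendsto_snd.eventually hnear] with p hp
    exact (hT p.1).norm_apply_sub_apply_le u (hMt₀ p.1) ⟨ht₀, by linarith⟩ hp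
  simpa using hdiff.add (hpointwise.comp tendsto_fst)

end Family

end IsC0Semigroup

theorem contraction_semigroup_convergence_uniform_on_unit_interval_general
    {X ι : Type*} [NormedAddCommGroup X] [NormedSpace ℝ X] [CompleteSpace X]
    {l : Filter ι} [l.IsCountablyGenerated] {T : ι → ℝ → X →L[ℝ] X}
    (hT : ∀ i, IsC0Semigroup (T i)) (hM : ∀ b, ∃ M, ∀ i, ∀ t ∈ Icc 0 b, ‖T i t‖ ≤ M)
    {u : X} {v : ℝ → X} (hv : ContinuousOn v (Ici 0)) (hv0 : v 0 = u)
    (hconv : ∀ t > 0, Tendsto (fun i => T i t u) l (𝓝 (v t))) :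
    TendstoLocallyUniformlyOn (fun i t => T i t u) v l (Ici 0) :=
  tendstoLocallyUniformlyOn_iff_forall_tendsto.2 fun t₀ ht₀ =>
    (((hv t₀ ht₀).tendsto.comp tendsto_snd).prodMk_nhds
      (IsC0Semigroup.tendsto_orbit_prod_nhdsWithin_Ici hT hM hv hv0 hconv ht₀)).mono_right
        (nhds_le_uniformity (v t₀))

/-- cf. Yosida, Theorem IX.12.1. If `T_n(t)` are strongly
continuous contraction semigroups on a Banach space `X` with
`T_n(t)u → T_0(t)u` for every `u ∈ X` and `t > 0`, then for every fixed `u` the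
convergence is uniform in `t ∈ [0,1]`. -/
theorem contraction_semigroup_convergence_uniform_on_unit_interval
    {X : Type*} [NormedAddCommGroup X] [NormedSpace ℝ X] [CompleteSpace X]
    (T : ℕ → ℝ → X →L[ℝ] X)
    (hid : ∀ n, T n 0 = ContinuousLinearMap.id ℝ X)
    (hsemigroup : ∀ n, ∀ s ≥ (0:ℝ), ∀ t ≥ (0:ℝ),
      T n (s + t) = (T n s).comp (T n t))
    (hcontraction : ∀ n, ∀ t ≥ (0:ℝ), ‖T n t‖ ≤ 1)
    (hstrong_cont : ∀ n (u : X), ContinuousOn (fun t => T n t u) (Set.Ici 0))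
    (hconv : ∀ (u : X) (t : ℝ), 0 < t →
      Tendsto (fun n => T n t u) atTop (𝓝 (T 0 t u))) :
    ∀ u : X, TendstoUniformlyOn (fun n t => T n t u) (fun t => T 0 t u)
      atTop (Set.Icc (0:ℝ) 1) := by
  have hT : ∀ n, IsC0Semigroup (T n) := fun n => ⟨hid n, hsemigroup n, hstrong_cont n⟩
  intro u
  exact (tendstoLocallyUniformlyOn_iff_tendstoUniformlyOn_of_compact isCompact_Icc).1 <|
    (contraction_semigroup_convergence_uniform_on_unit_interval_general hT
      (fun _ => ⟨1, fun n t ht => hcontraction n t ht.1⟩) (hstrong_cont 0 u)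
      (by simp [hid]) (hconv u)).mono Icc_subset_Ici_self
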